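/- Let ε ∈ [−1/2, 1/2] with ε ≠ 0. Then there exists a constant C_ε > 0, depending only on A₂, K₂ and ε, such that for every integer N ≥ 2 (h = 1/N) and all i, j ∈ {0,…,N−1}, the midpoint quadrature error satisfies |E^ε_{ij}| ≤ C_ε h² log(1/h). -/

import Mathlib

noncomputable section

/-- Smooth kernel data, 1-periodic in each variable. -/
def SPK (A : ℝ → ℝ → ℂ) : Prop :=
  ContDiff ℝ (⊤ : ℕ∞) (fun p : ℝ × ℝ => A p.1 p.2) ∧
    (∀ s t, A (s + 1) t = A s t) ∧ (∀ s t, A s (t + 1) = A s t)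

/-- Logarithmic kernel `V(s,t) = (i/(2π)) A(s,t) log(sin²(π(s−t))) + K(s,t)`. -/
def logKer (A K : ℝ → ℝ → ℂ) (s t : ℝ) : ℂ :=
  Complex.I / (2 * Real.pi) * A s t * (Real.log (Real.sin (Real.pi * (s - t)) ^ 2) : ℂ) + K s t

/-- Grid point `s_{j+ε} = (j − 1/2 + ε)h`. -/
def sg (h ε : ℝ) (j : ℤ) : ℝ := ((j : ℝ) - 1 / 2 + ε) * h

/-- Grid point `t_{j+ε} = (j + ε)h`. -/
def tg (h ε : ℝ) (j : ℤ) : ℝ := ((j : ℝ) + ε) * h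

/-- Integral operator with kernel `V`. -/
def Vop (V : ℝ → ℝ → ℂ) (φ : ℝ → ℂ) (s : ℝ) : ℂ := ∫ t in (0:ℝ)..1, V s t * φ t

/-- Hypersingular operator `W = −D V₁ D + V₂`. -/
def Wop (V1 V2 : ℝ → ℝ → ℂ) (φ : ℝ → ℂ) (s : ℝ) : ℂ :=
  -deriv (Vop V1 (deriv φ)) s + Vop V2 φ s

/-- Nyström matrix entries `W^ε_{ij}`. -/
def Wmat (V1 V2 : ℝ → ℝ → ℂ) (h ε : ℝ) (i j : ℤ) : ℂ :=
  V1 (sg h ε (i + 1)) (sg h 0 (j + 1)) - V1 (sg h ε i) (sg h 0 (j + 1))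
    - V1 (sg h ε (i + 1)) (sg h 0 j) + V1 (sg h ε i) (sg h 0 j)
    + (h : ℂ) ^ 2 * V2 (tg h ε i) (tg h 0 j)

/-- Fourier coefficient of a 1-periodic function. -/
def fc (u : ℝ → ℂ) (m : ℤ) : ℂ :=
  ∫ t in (0:ℝ)..1, u t * Complex.exp (-(2 * Real.pi * Complex.I * (m : ℂ) * (t : ℂ)))

/-- Periodic Sobolev norm of order `r`. -/
def sobNorm (r : ℝ) (u : ℝ → ℂ) : ℝ :=
  Real.sqrt (‖fc u 0‖ ^ 2 +
    ∑' m : ℤ, if m = 0 then 0 else |(m : ℝ)| ^ (2 * r) * ‖fc u m‖ ^ 2)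

/-- 1-periodic step function on the ε-shifted grid with coefficients `v`. -/
def stepf (N : ℕ) (ε : ℝ) (v : ZMod N → ℂ) (s : ℝ) : ℂ :=
  v ((⌊s * N + 1 / 2 - ε⌋ : ℤ) : ZMod N)

/-- Midpoint quadrature error matrix entries `E^ε_{ij}`. -/
def Emat (V2 : ℝ → ℝ → ℂ) (h ε : ℝ) (i j : ℤ) : ℂ :=
  (∫ s in (sg h ε i)..(sg h ε (i + 1)), ∫ t in (sg h 0 j)..(sg h 0 (j + 1)), V2 s t)
    - (h : ℂ) ^ 2 * V2 (tg h ε i) (tg h 0 j)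

/-- Spectral (ℓ²-operator) norm of a complex `N×N` matrix. -/
def specNorm {N : ℕ} (M : Matrix (Fin N) (Fin N) ℂ) : ℝ :=
  ‖LinearMap.toContinuousLinearMap (Matrix.toEuclideanLin M)‖

/-- The function `C̄₁(t) = −(1/(2πi)) log(4 sin²(πt))`. -/
def Cbar1 (t : ℝ) : ℂ :=
  -(1 / (2 * Real.pi * Complex.I)) * (Real.log (4 * Real.sin (Real.pi * t) ^ 2) : ℂ)

end

/-!
Both terms of `E^ε_{ij}` are `O(h² log (1/h))` on their own. The coefficients are bounded on compact
sets, so only the size of `log (sin² (πu))` matters, and near an integer `n` it is at most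
`2 log 2 - 2 log |u - n|`. On an interval of length `h` the integral of the latter is
`O(h log (1/h))`, wherever the interval lies. In the point evaluation, `u = (i - j + ε) / N` has
distance at least `|ε - round ε| / N` from every integer, so the logarithm is `O(log N)`.
-/

section Logarithm

open Real MeasureTheory

theorem two_mul_mul_one_sub_le_sin_pi_mul {x : ℝ} (hx₀ : 0 ≤ x) (hx₁ : x ≤ 1) :
    2 * x * (1 - x) ≤ sin (π * x) := by
  have two_mul_le_sin {y : ℝ} (hy₀ : 0 ≤ y) (hy : y ≤ 1 / 2) : 2 * y ≤ sin (π * y) :=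
    calc 2 * y = 2 / π * (π * y) := by field_simp
      _ ≤ sin (π * y) := mul_le_sin (by positivity) (by nlinarith [pi_pos])
  rcases le_total x (1 / 2) with hx | hx
  · nlinarith [two_mul_le_sin hx₀ hx]
  · have hsymm : sin (π * (1 - x)) = sin (π * x) := by rw [mul_one_sub, sin_pi_sub]
    nlinarith [two_mul_le_sin (sub_nonneg.2 hx₁) (by linarith)]

theorem abs_sin_pi_mul_sub_int (u : ℝ) (n : ℤ) : |sin (π * (u - n))| = |sin (π * u)| := by
  rw [mul_sub, mul_comm π (n : ℝ), sin_sub_int_mul_pi, abs_mul, abs_zpow, abs_neg, abs_one,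
    one_zpow, one_mul]

theorem abs_sub_int_div_two_le_abs_sin_pi_mul {u : ℝ} {n : ℤ} (hu : |u - n| ≤ 3 / 4) :
    |u - n| / 2 ≤ |sin (π * u)| :=
  calc |u - n| / 2 ≤ 2 * |u - n| * (1 - |u - n|) := by nlinarith [abs_nonneg (u - n)]
    _ ≤ sin (π * |u - n|) := two_mul_mul_one_sub_le_sin_pi_mul (abs_nonneg _) (by linarith)
    _ = |sin (π * (u - n))| := by
      have hle : |π * (u - n)| ≤ π := by
        rw [abs_mul, abs_of_pos pi_pos]
        nlinarith [pi_pos]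
      rw [abs_sin_eq_sin_abs_of_abs_le_pi hle, abs_mul, abs_of_pos pi_pos]
    _ = |sin (π * u)| := abs_sin_pi_mul_sub_int u n

-- At `u = n` both logarithms have the junk value `log 0 = 0`, so this point is not excluded.
theorem abs_log_sin_pi_mul_sq_le {u : ℝ} {n : ℤ} (hu : |u - n| ≤ 3 / 4) :
    |log (sin (π * u) ^ 2)| ≤ 2 * log 2 - 2 * log (u - n) := by
  have hsq : log (sin (π * u) ^ 2) = 2 * log |sin (π * u)| := by rw [log_abs, log_pow]; norm_cast
  have hnonpos : log |sin (π * u)| ≤ 0 := log_nonpos (abs_nonneg _) (abs_sin_le_one _)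
  rw [hsq, abs_of_nonpos (by linarith), ← log_abs (u - n)]
  rcases (abs_nonneg (u - n)).eq_or_lt with hzero | hpos
  · have hsin : |sin (π * u)| = 0 := by
      rw [← abs_sin_pi_mul_sub_int u n, abs_eq_zero.1 hzero.symm, mul_zero, sin_zero, abs_zero]
    rw [hsin, ← hzero, log_zero]
    linarith [log_pos one_lt_two]
  · have hlog := log_le_log (half_pos hpos) (abs_sub_int_div_two_le_abs_sin_pi_mul hu)
    rw [log_div hpos.ne' two_ne_zero] at hlog
    linarith

theorem intervalIntegrable_log_sin_pi_mul_sq (a b : ℝ) :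
    IntervalIntegrable (fun u ↦ log (sin (π * u) ^ 2)) volume a b := by
  have hsin : IntervalIntegrable (fun u ↦ log (sin (π * u))) volume a b := by
    simpa [pi_ne_zero] using
      (intervalIntegrable_log_sin (a := π * a) (b := π * b)).comp_mul_left (c := π)
  simpa only [log_pow] using hsin.const_mul ((2 : ℕ) : ℝ)

theorem mul_log_add_mul_log_le {x y : ℝ} (hx : 0 ≤ x) (hy : 0 ≤ y) :
    x * log x + y * log y ≤ (x + y) * log (x + y) := by
  have mul_log_le {a b : ℝ} (ha : 0 ≤ a) (hab : a ≤ b) : a * log a ≤ a * log b := by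
    rcases ha.eq_or_lt with rfl | ha
    · simp only [zero_mul, le_refl]
    · gcongr
  linarith [mul_log_le hx (le_add_of_nonneg_right hy), mul_log_le hy (le_add_of_nonneg_left hx)]

theorem add_mul_log_add_div_two_le {x y : ℝ} (hx : 0 ≤ x) (hy : 0 ≤ y) :
    (x + y) * log ((x + y) / 2) ≤ x * log x + y * log y := by
  have hhalf : (0 : ℝ) ≤ 1 / 2 := by norm_num
  have hconvex := convexOn_mul_log.2 hx hy hhalf hhalf (by norm_num)
  simp only [smul_eq_mul] at hconvex
  rw [show 1 / 2 * x + 1 / 2 * y = (x + y) / 2 by ring] at hconvex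
  linarith

-- Equality holds for the interval centred at `0`.
theorem mul_log_div_two_sub_one_le_integral_log {a b : ℝ} (hab : a ≤ b) :
    (b - a) * (log ((b - a) / 2) - 1) ≤ ∫ v in a..b, log v := by
  have hlen : (b - a) * log ((b - a) / 2) ≤ (b - a) * log (b - a) := by
    rcases hab.eq_or_lt with rfl | hab
    · simp only [sub_self, zero_mul, le_refl]
    · have : 0 < b - a := sub_pos.2 hab
      gcongr
      exact half_le_self this.le
  rw [integral_log]
  rcases le_total 0 a with ha | ha
  · have hsuper := mul_log_add_mul_log_le ha (sub_nonneg.2 hab)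
    rw [add_sub_cancel] at hsuper
    linarith
  rcases le_total 0 b with hb | hb
  · have hconvex := add_mul_log_add_div_two_le hb (neg_nonneg.2 ha)
    rw [log_neg_eq_log, ← sub_eq_add_neg] at hconvex
    linarith
  · have hsuper := mul_log_add_mul_log_le (neg_nonneg.2 hb) (sub_nonneg.2 hab)
    rw [show -b + (b - a) = -a by ring, log_neg_eq_log, log_neg_eq_log] at hsuper
    linarith

theorem integral_abs_log_sin_pi_mul_sq_le {a b : ℝ} (hab : a ≤ b) (hlen : b - a ≤ 1 / 2) :
    ∫ u in a..b, |log (sin (π * u) ^ 2)| ≤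
      (b - a) * (2 * log 2 + 2 - 2 * log ((b - a) / 2)) := by
  -- The integer nearest to the midpoint is within `3 / 4` of the whole interval.
  set n : ℤ := round ((a + b) / 2)
  have hmid := abs_le.1 (abs_sub_round ((a + b) / 2))
  have hlog : IntervalIntegrable (fun u ↦ log (u - n)) volume a b := by
    simpa only [sub_add_cancel] using
      (intervalIntegral.intervalIntegrable_log' (a := a - n) (b := b - n)).comp_sub_right (n : ℝ)
  calc ∫ u in a..b, |log (sin (π * u) ^ 2)|
      ≤ ∫ u in a..b, (2 * log 2 - 2 * log (u - n)) := by
        refine intervalIntegral.integral_mono_on hab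
          (intervalIntegrable_log_sin_pi_mul_sq a b).abs
          (intervalIntegrable_const.sub (hlog.const_mul 2)) fun u hu ↦ abs_log_sin_pi_mul_sq_le ?_
        rw [abs_le]
        constructor <;> linarith [hu.1, hu.2]
    _ = (b - a) * (2 * log 2) - 2 * ∫ v in (a - n)..(b - n), log v := by
        rw [intervalIntegral.integral_sub intervalIntegrable_const (hlog.const_mul 2),
          intervalIntegral.integral_const, intervalIntegral.integral_const_mul,
          intervalIntegral.integral_comp_sub_right, smul_eq_mul]
    _ ≤ (b - a) * (2 * log 2 + 2 - 2 * log ((b - a) / 2)) := by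
        have hint := mul_log_div_two_sub_one_le_integral_log (sub_le_sub_right hab (n : ℝ))
        rw [sub_sub_sub_cancel_right] at hint
        linarith

theorem abs_sub_round_div_le_abs_div_sub_int (x : ℝ) {N : ℕ} (hN : N ≠ 0) (n : ℤ) :
    |x - round x| / N ≤ |x / N - n| := by
  have hNpos : (0 : ℝ) < N := by positivity
  calc |x - round x| / N ≤ |x - (n * N : ℤ)| / N :=
        div_le_div_of_nonneg_right (round_le x _) hNpos.le
    _ = |x / N - n| := by
        rw [← abs_of_pos hNpos, ← abs_div, abs_of_pos hNpos]
        push_cast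
        field_simp

theorem abs_log_sin_pi_mul_div_sq_le {x : ℝ} (hx : x ≠ round x) {N : ℕ} (hN : N ≠ 0) :
    |log (sin (π * (x / N)) ^ 2)| ≤ 2 * log 2 + 2 * log N - 2 * log |x - round x| := by
  have hdist : 0 < |x - round x| := abs_pos.2 (sub_ne_zero.2 hx)
  have hNpos : (0 : ℝ) < N := by positivity
  have hsin := abs_log_sin_pi_mul_sq_le ((abs_sub_round (x / N)).trans (by norm_num))
  have hlog := log_le_log (by positivity)
    (abs_sub_round_div_le_abs_div_sub_int x hN (round (x / N)))
  rw [log_div hdist.ne' hNpos.ne', log_abs (x / N - _)] at hlog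
  linarith

end Logarithm

section Kernel

open Real MeasureTheory

variable {A K : ℝ → ℝ → ℂ} {M : ℝ}

theorem norm_logKer_le {s t : ℝ} (hA : ‖A s t‖ ≤ M) (hK : ‖K s t‖ ≤ M) :
    ‖logKer A K s t‖ ≤ M * (|log (sin (π * (s - t)) ^ 2)| + 1) := by
  have hcoeff : ‖Complex.I / (2 * π : ℂ)‖ ≤ 1 := by
    rw [norm_div, norm_mul, Complex.norm_I, Complex.norm_real, norm_of_nonneg pi_nonneg,
      Complex.norm_ofNat]
    exact div_le_one_of_le₀ (by linarith [pi_gt_three]) (by positivity)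
  calc ‖logKer A K s t‖
      ≤ ‖Complex.I / (2 * π : ℂ)‖ * ‖A s t‖ * |log (sin (π * (s - t)) ^ 2)| + ‖K s t‖ := by
        refine (norm_add_le _ _).trans_eq ?_
        rw [norm_mul, norm_mul, Complex.norm_real, norm_eq_abs]
    _ ≤ 1 * M * |log (sin (π * (s - t)) ^ 2)| + M := by gcongr
    _ = M * (|log (sin (π * (s - t)) ^ 2)| + 1) := by ring

theorem norm_integral_logKer_le {s a b : ℝ} (hab : a ≤ b) (hlen : b - a ≤ 1 / 2)
    (hA : ∀ t ∈ Set.Icc a b, ‖A s t‖ ≤ M) (hK : ∀ t ∈ Set.Icc a b, ‖K s t‖ ≤ M) :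
    ‖∫ t in a..b, logKer A K s t‖ ≤
      M * ((b - a) * (3 + 2 * log 2 - 2 * log ((b - a) / 2))) := by
  have hM : 0 ≤ M := (norm_nonneg _).trans (hA a (Set.left_mem_Icc.2 hab))
  have hint : IntervalIntegrable (fun t ↦ |log (sin (π * (s - t)) ^ 2)|) volume a b := by
    simpa only [sub_sub_cancel] using
      ((intervalIntegrable_log_sin_pi_mul_sq (s - a) (s - b)).comp_sub_left s).abs
  calc ‖∫ t in a..b, logKer A K s t‖
      ≤ ∫ t in a..b, M * (|log (sin (π * (s - t)) ^ 2)| + 1) := by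
        refine intervalIntegral.norm_integral_le_of_norm_le hab (.of_forall fun t ht ↦ ?_)
          ((hint.add intervalIntegrable_const).const_mul M)
        have ht' := Set.Ioc_subset_Icc_self ht
        exact norm_logKer_le (hA t ht') (hK t ht')
    _ = M * ((∫ u in (s - b)..(s - a), |log (sin (π * u) ^ 2)|) + (b - a)) := by
        rw [intervalIntegral.integral_const_mul,
          intervalIntegral.integral_add hint intervalIntegrable_const,
          intervalIntegral.integral_comp_sub_left fun u ↦ |log (sin (π * u) ^ 2)|,
          intervalIntegral.integral_const, smul_eq_mul, mul_one]
    _ ≤ M * ((b - a) * (3 + 2 * log 2 - 2 * log ((b - a) / 2))) := by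
        have hlog := integral_abs_log_sin_pi_mul_sq_le (sub_le_sub_left hab s)
          (by rwa [sub_sub_sub_cancel_left])
        rw [sub_sub_sub_cancel_left] at hlog
        gcongr
        linarith

end Kernel

section QuadratureError

open Real

theorem sg_add_one (h ε : ℝ) (j : ℤ) : sg h ε (j + 1) = sg h ε j + h := by
  unfold sg
  push_cast
  ring

theorem tg_mem_Icc_sg {h : ℝ} (hh : 0 ≤ h) (ε : ℝ) (j : ℤ) :
    tg h ε j ∈ Set.Icc (sg h ε j) (sg h ε (j + 1)) := by
  rw [sg_add_one]
  unfold tg sg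
  constructor <;> nlinarith

theorem tg_sub_tg (N : ℕ) (ε : ℝ) (i j : ℤ) :
    tg (1 / N) ε i - tg (1 / N) 0 j = (ε + (i - j : ℤ)) / N := by
  unfold tg
  push_cast
  ring

theorem abs_le_of_mem_Icc_sg {N : ℕ} (hN : N ≠ 0) {R ε x : ℝ} {j : ℤ} (hj : |(j : ℝ)| ≤ R * N)
    (hx : x ∈ Set.Icc (sg (1 / N) ε j) (sg (1 / N) ε (j + 1))) :
    |x| ≤ R + |ε| + 1 := by
  have hNone : (1 : ℝ) ≤ N := by exact_mod_cast Nat.one_le_iff_ne_zero.2 hN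
  have hcell : |x * N - (j + ε)| ≤ 1 / 2 := by
    have hscaled : x * N ∈ Set.Icc (j - 1 / 2 + ε) (j - 1 / 2 + ε + 1) := by
      rw [sg_add_one, sg, ← add_one_mul, mul_one_div, mul_one_div] at hx
      exact ⟨(div_le_iff₀ (by linarith)).1 hx.1, (le_div_iff₀ (by linarith)).1 hx.2⟩
    rw [abs_le]
    constructor <;> linarith [hscaled.1, hscaled.2]
  have hbound : |x| * N ≤ (R + |ε| + 1) * N :=
    calc |x| * N = |x * N - (j + ε) + j + ε| := by
          rw [add_assoc, sub_add_cancel, abs_mul, Nat.abs_cast]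
      _ ≤ |x * N - (j + ε)| + |(j : ℝ)| + |ε| := abs_add_three _ _ _
      _ ≤ (R + |ε| + 1) * N := by nlinarith [abs_nonneg ε]
  exact le_of_mul_le_mul_right hbound (by linarith)

theorem norm_Emat_le {V : ℝ → ℝ → ℂ} {h ε B P : ℝ} {i j : ℤ} (hh : 0 ≤ h)
    (hint : ∀ s ∈ Set.Icc (sg h ε i) (sg h ε (i + 1)),
      ‖∫ t in (sg h 0 j)..(sg h 0 (j + 1)), V s t‖ ≤ B)
    (hpoint : ‖V (tg h ε i) (tg h 0 j)‖ ≤ P) :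
    ‖Emat V h ε i j‖ ≤ B * h + h ^ 2 * P := by
  have hle : sg h ε i ≤ sg h ε (i + 1) := by rw [sg_add_one]; linarith
  refine (norm_sub_le _ _).trans (add_le_add ?_ ?_)
  · have hconst := intervalIntegral.norm_integral_le_of_norm_le_const fun s hs ↦
      hint s (Set.uIoc_subset_uIcc.trans_eq (Set.uIcc_of_le hle) hs)
    rwa [sg_add_one h ε i, add_sub_cancel_left, abs_of_nonneg hh, ← sg_add_one] at hconst
  · rw [norm_mul, norm_pow, Complex.norm_real, norm_of_nonneg hh]
    gcongr

theorem norm_Emat_logKer_le {A K : ℝ → ℝ → ℂ} {M ε : ℝ} (hε : ε ≠ round ε) {N : ℕ} (hN : 2 ≤ N)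
    {i j : ℤ}
    (hA : ∀ s ∈ Set.Icc (sg (1 / N) ε i) (sg (1 / N) ε (i + 1)),
      ∀ t ∈ Set.Icc (sg (1 / N) 0 j) (sg (1 / N) 0 (j + 1)), ‖A s t‖ ≤ M)
    (hK : ∀ s ∈ Set.Icc (sg (1 / N) ε i) (sg (1 / N) ε (i + 1)),
      ∀ t ∈ Set.Icc (sg (1 / N) 0 j) (sg (1 / N) 0 (j + 1)), ‖K s t‖ ≤ M) :
    ‖Emat (logKer A K) (1 / N) ε i j‖ ≤
      M * (1 / N) ^ 2 * (4 + 6 * log 2 - 2 * log |ε - round ε| + 4 * log N) := by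
  have hNtwo : (2 : ℝ) ≤ N := by exact_mod_cast hN
  have hNne : N ≠ 0 := by lia
  have hh : (0 : ℝ) ≤ 1 / N := by positivity
  have hwidth : sg (1 / N) 0 (j + 1) - sg (1 / N) 0 j = 1 / N := by
    rw [sg_add_one, add_sub_cancel_left]
  have htgi := tg_mem_Icc_sg hh ε i
  have htgj := tg_mem_Icc_sg hh 0 j
  have hM : 0 ≤ M := (norm_nonneg _).trans (hA _ htgi _ htgj)
  have hint : ∀ s ∈ Set.Icc (sg (1 / N) ε i) (sg (1 / N) ε (i + 1)),
      ‖∫ t in (sg (1 / N) 0 j)..(sg (1 / N) 0 (j + 1)), logKer A K s t‖ ≤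
        M * (1 / N * (3 + 4 * log 2 + 2 * log N)) := fun s hs ↦ by
    have hlog : log ((1 : ℝ) / N / 2) = -log N - log 2 := by
      rw [log_div (by positivity) two_ne_zero, one_div, log_inv]
    have hcell := norm_integral_logKer_le (by linarith)
      (hwidth.trans_le (one_div_le_one_div_of_le two_pos hNtwo)) (hA s hs) (hK s hs)
    rw [hwidth, hlog] at hcell
    exact hcell.trans_eq (by ring)
  have hpoint : ‖logKer A K (tg (1 / N) ε i) (tg (1 / N) 0 j)‖ ≤
      M * (1 + 2 * log 2 + 2 * log N - 2 * log |ε - round ε|) := by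
    have hshift : ε + (i - j : ℤ) - round (ε + (i - j : ℤ)) = ε - round ε := by
      rw [round_add_intCast]
      push_cast
      ring
    have hlog := abs_log_sin_pi_mul_div_sq_le (sub_ne_zero.1 (hshift ▸ sub_ne_zero.2 hε)) hNne
    rw [hshift, ← tg_sub_tg] at hlog
    refine (norm_logKer_le (hA _ htgi _ htgj) (hK _ htgi _ htgj)).trans ?_
    gcongr
    linarith
  exact (norm_Emat_le hh hint hpoint).trans_eq (by ring)

theorem exists_pos_norm_le_of_abs_le {A K : ℝ → ℝ → ℂ} (hA : Continuous (Function.uncurry A))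
    (hK : Continuous (Function.uncurry K)) (ρ : ℝ) :
    ∃ M > 0, ∀ s t, |s| ≤ ρ → |t| ≤ ρ → ‖A s t‖ ≤ M ∧ ‖K s t‖ ≤ M := by
  obtain ⟨M, hMpos, hM⟩ :=
    ((isCompact_closedBall (0 : ℝ × ℝ) ρ).image (hA.prodMk hK)).isBounded.exists_pos_norm_le
  exact ⟨M, hMpos, fun s t hs ht ↦ norm_prod_le_iff.1 <|
    hM _ ⟨(s, t), mem_closedBall_zero_iff.2 (norm_prod_le_iff.2 ⟨hs, ht⟩), rfl⟩⟩

theorem ne_round_of_abs_le_half {ε : ℝ} (hε : |ε| ≤ 1 / 2) (hε₀ : ε ≠ 0) : ε ≠ round ε := by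
  intro hround
  have hlt : |round ε| < 1 := by
    rw [← Int.cast_lt (R := ℝ), Int.cast_abs, ← hround, Int.cast_one]
    linarith
  exact hε₀ (by rw [hround, Int.abs_lt_one_iff.1 hlt, Int.cast_zero])

theorem stmt_3_general {A K : ℝ → ℝ → ℂ} (hA : Continuous (Function.uncurry A))
    (hK : Continuous (Function.uncurry K)) {ε : ℝ} (hε : ε ≠ round ε) (R : ℝ) :
    ∃ C > (0 : ℝ), ∀ N : ℕ, 2 ≤ N → ∀ i j : ℤ, |(i : ℝ)| ≤ R * N → |(j : ℝ)| ≤ R * N →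
      ‖Emat (logKer A K) (1 / (N : ℝ)) ε i j‖ ≤ C * (1 / (N : ℝ)) ^ 2 * log (N : ℝ) := by
  obtain ⟨M, hMpos, hM⟩ := exists_pos_norm_le_of_abs_le hA hK (R + |ε| + 1)
  set D : ℝ := 4 + 6 * log 2 - 2 * log |ε - round ε|
  have hlog2 : 0 < log 2 := log_pos one_lt_two
  have hD : 0 < D := by
    have hdist : log |ε - round ε| ≤ 0 :=
      log_nonpos (abs_nonneg _) ((abs_sub_round ε).trans (by norm_num))
    linarith
  refine ⟨M * (D / log 2 + 4), by positivity, fun N hN i j hi hj ↦ ?_⟩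
  have hcell : ∀ s ∈ Set.Icc (sg (1 / N) ε i) (sg (1 / N) ε (i + 1)),
      ∀ t ∈ Set.Icc (sg (1 / N) 0 j) (sg (1 / N) 0 (j + 1)), ‖A s t‖ ≤ M ∧ ‖K s t‖ ≤ M := by
    intro s hs t ht
    have ht' := abs_le_of_mem_Icc_sg (by lia) hj ht
    rw [abs_zero, add_zero] at ht'
    exact hM s t (abs_le_of_mem_Icc_sg (by lia) hi hs) (by linarith [abs_nonneg ε])
  have hlogN : log 2 ≤ log N := log_le_log two_pos (by exact_mod_cast hN)
  calc ‖Emat (logKer A K) (1 / N) ε i j‖ ≤ M * (1 / N) ^ 2 * (D + 4 * log N) :=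
        norm_Emat_logKer_le hε hN (fun s hs t ht ↦ (hcell s hs t ht).1)
          fun s hs t ht ↦ (hcell s hs t ht).2
    _ ≤ M * (1 / N) ^ 2 * (D / log 2 * log N + 4 * log N) := by
        gcongr
        rw [div_mul_eq_mul_div, le_div_iff₀ hlog2]
        gcongr
    _ = M * (D / log 2 + 4) * (1 / N) ^ 2 * log N := by ring

end QuadratureError

/-- entrywise bound `|E^ε_{ij}| ≤ C_ε h² log(1/h)` for the midpoint
quadrature error matrix. -/
theorem stmt_3
    (A2 K2 : ℝ → ℝ → ℂ) (hA2 : SPK A2) (hK2 : SPK K2)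
    (ε : ℝ) (hε1 : ε ∈ Set.Icc (-(1:ℝ)/2) (1/2)) (hε0 : ε ≠ 0) :
    ∃ C > (0:ℝ), ∀ N : ℕ, 2 ≤ N → ∀ i j : ℤ,
      0 ≤ i → i < (N : ℤ) → 0 ≤ j → j < (N : ℤ) →
        ‖Emat (logKer A2 K2) (1 / (N : ℝ)) ε i j‖ ≤
          C * (1 / (N : ℝ)) ^ 2 * Real.log (N : ℝ) := by
  have hε : |ε| ≤ 1 / 2 := abs_le.2 ⟨by linarith [hε1.1], hε1.2⟩
  have index_le {N : ℕ} {k : ℤ} (hk₀ : 0 ≤ k) (hkN : k < N) : |(k : ℝ)| ≤ 1 * N := by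
    rw [one_mul]
    exact_mod_cast (abs_of_nonneg hk₀).trans_le hkN.le
  obtain ⟨C, hC, hbound⟩ := stmt_3_general hA2.1.continuous hK2.1.continuous
    (ne_round_of_abs_le_half hε hε0) 1
  exact ⟨C, hC, fun N hN i j hi₀ hiN hj₀ hjN ↦
    hbound N hN i j (index_le hi₀ hiN) (index_le hj₀ hjN)⟩
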